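/- Let C be a braided monoidal category in which coequalizers are preserved by the monoidal product, and let (A,t₁,t₂,t₃,t₄,e₁,e₂,j) be a regular weak multiplier bimonoid in C such that m := (j⊗1)∘t₁ is a regular epimorphism and non-degenerate with respect to some class of objects containing I, A and A⊗A. Then: (1) there is a unique morphism g : A⊗A → A⊗A satisfying g∘(1⊗m) = (⊓̄ᴿ₂⊗1)∘(1⊗t₁), and it equivalently satisfies g∘(m⊗1) = (1⊗⊓̄ᴸ₁)∘(t₂⊗1); (2) (m⊗1)∘(1⊗c)∘(g⊗1) = (m⊗1)∘(1⊗e₁)∘(1⊗c) and (1⊗m)∘(c⊗1)∘(1⊗g) = (1⊗m)∘(e₂⊗1)∘(c⊗1); (3) g∘(m⊗1) = (m⊗1)∘(1⊗g) and g∘(1⊗m) = (1⊗m)∘(g⊗1); (4) (1⊗j)∘g = (1⊗j)∘t₁ = ⊓̄ᴿ₂ and (j⊗1)∘g = (j⊗1)∘t₂ = ⊓̄ᴸ₁. -/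

import Mathlib

open CategoryTheory Category MonoidalCategory Limits

universe v u

namespace WeakMultiplierBimonoid

variable {C : Type u} [Category.{v} C] [MonoidalCategory C] [BraidedCategory C]

def wl {A : C} (f : A ⊗ A ⟶ A ⊗ A) : A ⊗ (A ⊗ A) ⟶ A ⊗ (A ⊗ A) :=
  (α_ A A A).inv ≫ (f ▷ A) ≫ (α_ A A A).hom

def ml {A : C} (f : A ⊗ A ⟶ A) : A ⊗ (A ⊗ A) ⟶ A ⊗ A :=
  (α_ A A A).inv ≫ (f ▷ A)

def NdLeftOn {Z V W : C} (v : Z ⊗ V ⟶ W) (𝒴 : Set C) : Prop :=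
  ∀ (X : C), ∀ Y ∈ 𝒴, Function.Injective
    (fun g : X ⟶ V ⊗ Y => (Z ◁ g) ≫ (α_ Z V Y).inv ≫ (v ▷ Y))

def NdRightOn {Z V W : C} (v : Z ⊗ V ⟶ W) (𝒴 : Set C) : Prop :=
  NdLeftOn ((β_ V Z).hom ≫ v) 𝒴

/-- The "middle braiding" `1 ⊗ c ⊗ 1 : A⁴ ⟶ A⁴` on `(A ⊗ A) ⊗ (A ⊗ A)`. -/
def midSw (A : C) : (A ⊗ A) ⊗ (A ⊗ A) ⟶ (A ⊗ A) ⊗ (A ⊗ A) :=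
  (α_ A A (A ⊗ A)).hom ≫ (A ◁ (α_ A A A).inv) ≫ (A ◁ ((β_ A A).hom ▷ A)) ≫
    (A ◁ (α_ A A A).hom) ≫ (α_ A A (A ⊗ A)).inv

/-- A regular weak multiplier bimonoid on an object `A` of a braided monoidal category,
with multiplication non-degenerate with respect to the class `𝒴`
(Definition 2.9 of the paper). -/
structure RWMB (A : C) (𝒴 : Set C) where
  t₁ : A ⊗ A ⟶ A ⊗ A
  t₂ : A ⊗ A ⟶ A ⊗ A
  t₃ : A ⊗ A ⟶ A ⊗ A
  t₄ : A ⊗ A ⟶ A ⊗ A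
  e₁ : A ⊗ A ⟶ A ⊗ A
  e₂ : A ⊗ A ⟶ A ⊗ A
  j : A ⟶ 𝟙_ C
  /-- the induced multiplication -/
  m : A ⊗ A ⟶ A
  /-- counit condition (m1); in particular `m` is the induced multiplication -/
  hm₁ : m = t₁ ≫ (j ▷ A) ≫ (λ_ A).hom
  /-- counit condition (m2) -/
  hm₂ : m = t₂ ≫ (A ◁ j) ≫ (ρ_ A).hom
  /-- counit condition (m3) -/
  hm₃ : m = (β_ A A).hom ≫ t₃ ≫ (j ▷ A) ≫ (λ_ A).hom
  /-- counit condition (m4) -/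
  hm₄ : m = (β_ A A).hom ≫ t₄ ≫ (A ◁ j) ≫ (ρ_ A).hom
  /-- the class `𝒴` contains the monoidal unit -/
  memI : (𝟙_ C) ∈ 𝒴
  memA : A ∈ 𝒴
  memAA : (A ⊗ A) ∈ 𝒴
  /-- `m` is non-degenerate on the left with respect to `𝒴` -/
  ndl : NdLeftOn m 𝒴
  /-- `m` is non-degenerate on the right with respect to `𝒴` -/
  ndr : NdRightOn m 𝒴
  /-- relation (c12) -/
  hc12 : (A ◁ t₁) ≫ ml m = wl t₂ ≫ (A ◁ m)
  /-- relation (c13) -/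
  hc13 : wl t₁ ≫ (A ◁ (β_ A A).hom) ≫ (A ◁ m)
    = (A ◁ (β_ A A).hom) ≫ wl t₃ ≫ (A ◁ m)
  /-- relation (c14) -/
  hc14 : (A ◁ t₁) ≫ wl (β_ A A).hom ≫ ml m = wl t₄ ≫ (A ◁ m)
  /-- relation (c23) -/
  hc23 : wl t₂ ≫ (A ◁ (β_ A A).hom) ≫ (A ◁ m) = (A ◁ t₃) ≫ ml m
  /-- relation (c24) -/
  hc24 : (A ◁ t₂) ≫ wl (β_ A A).hom ≫ ml m = wl (β_ A A).hom ≫ (A ◁ t₄) ≫ ml m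
  /-- relation (c34) -/
  hc34 : (A ◁ t₃) ≫ wl (β_ A A).hom ≫ ml m = wl t₄ ≫ (A ◁ (β_ A A).hom) ≫ (A ◁ m)
  /-- interchange relation for `(t₂, t₁)` -/
  hi21 : (A ◁ t₁) ≫ wl t₂ = wl t₂ ≫ (A ◁ t₁)
  /-- interchange relation for `(t₄, t₁)` -/
  hi41 : (A ◁ t₁) ≫ wl t₄ = wl t₄ ≫ (A ◁ t₁)
  /-- interchange relation for `(t₂, t₃)` -/
  hi23 : (A ◁ t₃) ≫ wl t₂ = wl t₂ ≫ (A ◁ t₃)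
  /-- interchange relation for `(t₄, t₃)` -/
  hi43 : (A ◁ t₃) ≫ wl t₄ = wl t₄ ≫ (A ◁ t₃)
  /-- compatibility of the idempotents `e₁`, `e₂`:
  `(m ⊗ m) ∘ (1 ⊗ c ⊗ 1) ∘ (1 ⊗ 1 ⊗ e₁) = (m ⊗ m) ∘ (1 ⊗ c ⊗ 1) ∘ (e₂ ⊗ 1 ⊗ 1)` -/
  hecomp : ((A ⊗ A) ◁ e₁) ≫ midSw A ≫ (m ▷ (A ⊗ A)) ≫ (A ◁ m)
    = (e₂ ▷ (A ⊗ A)) ≫ midSw A ≫ (m ▷ (A ⊗ A)) ≫ (A ◁ m)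
  /-- Axiom I for the weakly counital fusion morphism `(t₁, e₁, j)` -/
  ax1 : (A ◁ t₁) ≫ wl (β_ A A).hom ≫ (A ◁ t₁) ≫ wl (β_ A A).inv ≫ wl t₁
    = wl t₁ ≫ (A ◁ t₁)
  /-- Axiom II -/
  ax2 : e₁ ≫ e₁ = e₁
  /-- Axiom III -/
  ax3 : t₁ ≫ e₁ = t₁
  /-- Axiom IV -/
  ax4 : (A ◁ e₁) ≫ (A ◁ (β_ A A).inv) ≫ wl t₁ ≫ (A ◁ (β_ A A).hom) ≫ ml m
    = (A ◁ (β_ A A).inv) ≫ wl t₁ ≫ (A ◁ (β_ A A).hom) ≫ ml m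
  /-- Axiom V -/
  ax5 : (A ◁ t₁) ≫ wl e₁ = wl e₁ ≫ (A ◁ t₁)
  /-- Axiom VI -/
  ax6 : wl t₁ ≫ (A ◁ e₁)
    = (A ◁ (β_ A A).inv) ≫ wl e₁ ≫ (A ◁ (β_ A A).hom) ≫ wl t₁
  /-- Axiom VII -/
  ax7 : wl t₁ ≫ (A ◁ ((j ▷ A) ≫ (λ_ A).hom)) ≫ m
    = (A ◁ (β_ A A).hom) ≫ (A ◁ e₁) ≫ (A ◁ ((A ◁ j) ≫ (ρ_ A).hom)) ≫ m
  /-- Axiom VIII -/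
  ax8 : wl t₁ ≫ (A ◁ (β_ A A).hom) ≫ ml m ≫ (j ▷ A) ≫ (λ_ A).hom
    = (A ◁ (β_ A A).hom) ≫ (A ◁ e₁) ≫ (A ◁ ((j ▷ A) ≫ (λ_ A).hom)) ≫ m

namespace RWMB

variable {A : C} {𝒴 : Set C} (S : RWMB A 𝒴)

/-- `⊓ᴸ₁ := (j ⊗ 1) ∘ e₁`. -/
def piL1 : A ⊗ A ⟶ A := S.e₁ ≫ (S.j ▷ A) ≫ (λ_ A).hom

/-- `⊓ᴸ₂ := (j ⊗ 1) ∘ t₄ ∘ c`. -/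
def piL2 : A ⊗ A ⟶ A := (β_ A A).hom ≫ S.t₄ ≫ (S.j ▷ A) ≫ (λ_ A).hom

/-- `⊓̄ᴿ₁ ∘ c⁻¹ = (1 ⊗ j) ∘ e₁`, the second leg of the coequalizer defining the base
object. -/
def piBarR1c : A ⊗ A ⟶ A := S.e₁ ≫ (A ◁ S.j) ≫ (ρ_ A).hom

end RWMB


/-- `⊓̄ᴿ₂ := (1 ⊗ j) ∘ t₁`. -/
def RWMB.piBarR2 {A : C} {𝒴 : Set C} (S : RWMB A 𝒴) : A ⊗ A ⟶ A :=
  S.t₁ ≫ (A ◁ S.j) ≫ (ρ_ A).hom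

/-- `⊓̄ᴸ₁ := (j ⊗ 1) ∘ t₂`. -/
def RWMB.piBarL1 {A : C} {𝒴 : Set C} (S : RWMB A 𝒴) : A ⊗ A ⟶ A :=
  S.t₂ ≫ (S.j ▷ A) ≫ (λ_ A).hom

/-!
Multiplying the first strand of `(⊓̄ᴿ₂ ⊗ 1) ∘ (1 ⊗ t₁)` from the right by a braided test strand
turns it, by Axioms VII and V, into `(m ⊗ 1) ∘ (1 ⊗ e₁) ∘ (1 ⊗ c)` precomposed with `1 ⊗ m`.
So it coequalizes whatever `1 ⊗ m` coequalizes, by non-degeneracy of `m`, and descends along the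
regular epimorphism `1 ⊗ m` to `g`. The other identities can be checked after precomposing with
the epimorphisms `1 ⊗ m ⊗ 1` and `1 ⊗ 1 ⊗ m` or, for the second half of (2) and for (4), after a
further multiplication.
-/

lemma isRegularEpi_map {D E : Type*} [Category* D] [Category* E] (F : D ⥤ E)
    [PreservesColimitsOfShape WalkingParallelPair F] {X Y : D} (f : X ⟶ Y) [IsRegularEpi f] :
    IsRegularEpi (F.map f) :=
  isRegularEpi_of_regularEpi
    { W := F.obj (IsRegularEpi.W f)
      left := F.map (IsRegularEpi.left f)
      right := F.map (IsRegularEpi.right f)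
      w := by rw [← F.map_comp, ← F.map_comp, IsRegularEpi.w]
      isColimit := isColimitCoforkMapOfIsColimit F _ (IsRegularEpi.isColimit f) }

section Monoidal

variable {D : Type*} [Category* D] [MonoidalCategory D]

instance isRegularEpi_whiskerLeft {X Y : D} (Z : D) (f : X ⟶ Y) [IsRegularEpi f]
    [PreservesColimitsOfShape WalkingParallelPair (tensorLeft Z)] : IsRegularEpi (Z ◁ f) :=
  isRegularEpi_map (tensorLeft Z) f

instance isRegularEpi_whiskerRight {X Y : D} (Z : D) (f : X ⟶ Y) [IsRegularEpi f]
    [PreservesColimitsOfShape WalkingParallelPair (tensorRight Z)] : IsRegularEpi (f ▷ Z) :=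
  isRegularEpi_map (tensorRight Z) f

/-- The morphism `f ⊗ 1 : (X ⊗ Y) ⊗ Z ⟶ (X' ⊗ Y') ⊗ Z` on right-nested products; `wl` is the
case where all objects are `A`. -/
def wlAt {X Y X' Y' : D} (f : X ⊗ Y ⟶ X' ⊗ Y') (Z : D) : X ⊗ Y ⊗ Z ⟶ X' ⊗ Y' ⊗ Z :=
  (α_ X Y Z).inv ≫ f ▷ Z ≫ (α_ X' Y' Z).hom

/-- The morphism `v ⊗ 1 : (X ⊗ Y) ⊗ Z ⟶ V ⊗ Z` on a right-nested product; `ml` is the case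
where all objects are `A`. -/
def mlAt {X Y V : D} (v : X ⊗ Y ⟶ V) (Z : D) : X ⊗ Y ⊗ Z ⟶ V ⊗ Z :=
  (α_ X Y Z).inv ≫ v ▷ Z

/-- The morphism `j ⊗ 1 : X ⊗ Z ⟶ Z`. -/
def counitAt {X : D} (j : X ⟶ 𝟙_ D) (Z : D) : X ⊗ Z ⟶ Z :=
  j ▷ Z ≫ (λ_ Z).hom

variable {X Y X' Y' V : D}

instance isRegularEpi_mlAt (v : X ⊗ Y ⟶ V) [IsRegularEpi v] (Z : D)
    [PreservesColimitsOfShape WalkingParallelPair (tensorRight Z)] : IsRegularEpi (mlAt v Z) :=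
  isRegularEpi_of_regularEpi <|
    (IsRegularEpi.getStruct (v ▷ Z)).ofArrowIso
      (Arrow.isoMk (α_ X Y Z) (Iso.refl _) (by simp [mlAt]))

lemma wlAt_comp {X'' Y'' : D} (f : X ⊗ Y ⟶ X' ⊗ Y') (g : X' ⊗ Y' ⟶ X'' ⊗ Y'') (Z : D) :
    wlAt (f ≫ g) Z = wlAt f Z ≫ wlAt g Z := by
  simp [wlAt]

lemma wlAt_naturality (f : X ⊗ Y ⟶ X' ⊗ Y') {Z Z' : D} (h : Z ⟶ Z') :
    X ◁ Y ◁ h ≫ wlAt f Z' = wlAt f Z ≫ X' ◁ Y' ◁ h := by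
  simp only [wlAt, assoc]
  rw [associator_inv_naturality_right_assoc, ← associator_naturality_right,
    whisker_exchange_assoc]

lemma mlAt_naturality (v : X ⊗ Y ⟶ V) {Z Z' : D} (h : Z ⟶ Z') :
    X ◁ Y ◁ h ≫ mlAt v Z' = mlAt v Z ≫ V ◁ h := by
  simp only [mlAt, assoc]
  rw [associator_inv_naturality_right_assoc, whisker_exchange]

lemma counitAt_naturality (j : X ⟶ 𝟙_ D) {Z Z' : D} (h : Z ⟶ Z') :
    X ◁ h ≫ counitAt j Z' = counitAt j Z ≫ h := by
  simp only [counitAt, assoc]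
  rw [whisker_exchange_assoc, leftUnitor_naturality]

lemma wlAt_comp_counitAt (f : X ⊗ Y ⟶ X' ⊗ Y') (j : X' ⟶ 𝟙_ D) (Z : D) :
    wlAt f Z ≫ counitAt j (Y' ⊗ Z) = mlAt (f ≫ counitAt j Y') Z := by
  simp only [wlAt, counitAt, mlAt]
  monoidal

lemma wlAt_comp_whiskerLeft_counitAt (f : X ⊗ Y ⟶ X' ⊗ Y') (j : Y' ⟶ 𝟙_ D) (Z : D) :
    wlAt f Z ≫ X' ◁ counitAt j Z = mlAt (f ≫ X' ◁ j ≫ (ρ_ X').hom) Z := by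
  simp only [wlAt, counitAt, mlAt]
  monoidal

lemma mlAt_comp_whiskerLeft_counit (v : X ⊗ Y ⟶ V) {Z : D} (j : Z ⟶ 𝟙_ D) :
    mlAt v Z ≫ V ◁ j ≫ (ρ_ V).hom = X ◁ (Y ◁ j ≫ (ρ_ Y).hom) ≫ v := by
  rw [← reassoc_of% (mlAt_naturality v j)]
  simp only [mlAt]
  monoidal

lemma NdLeftOn.hom_ext {Z W : D} {𝒴 : Set D} {v : Z ⊗ V ⟶ W} (hv : NdLeftOn v 𝒴)
    (hY : Y ∈ 𝒴) {f g : X ⟶ V ⊗ Y} (h : Z ◁ f ≫ mlAt v Y = Z ◁ g ≫ mlAt v Y) : f = g :=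
  hv X Y hY h

end Monoidal

section Braided

variable {X Y X' Y' V : C}

lemma braiding_comp_whiskerLeft_counit (j : X ⟶ 𝟙_ C) (Y : C) :
    (β_ X Y).hom ≫ Y ◁ j ≫ (ρ_ Y).hom = counitAt j Y := by
  simp [counitAt, ← BraidedCategory.braiding_naturality_left_assoc]

lemma mlAt_comp_braiding (v : X ⊗ Y ⟶ V) (Z : C) :
    mlAt v Z ≫ (β_ V Z).hom = X ◁ (β_ Y Z).hom ≫ wlAt (β_ X Z).hom Y ≫ Z ◁ v := by
  simp [mlAt, wlAt, BraidedCategory.braiding_naturality_left,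
    BraidedCategory.braiding_tensor_left_hom]

lemma whiskerLeft_comp_braiding_inv (v : X ⊗ Y ⟶ V) (Z : C) :
    Z ◁ v ≫ (β_ V Z).inv = wlAt (β_ X Z).inv Y ≫ X ◁ (β_ Y Z).inv ≫ mlAt v Z := by
  simp [mlAt, wlAt]

lemma mlAt_comp_braiding_inv (v : X ⊗ Y ⟶ V) (Z : C) :
    mlAt v Z ≫ (β_ Z V).inv = X ◁ (β_ Z Y).inv ≫ wlAt (β_ Z X).inv Y ≫ Z ◁ v := by
  simp [mlAt, wlAt]

lemma whiskerLeft_mlAt_comp_wlAt_braiding (v : X ⊗ Y ⟶ V) (Z Z' : C) :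
    Z ◁ mlAt v Z' ≫ wlAt (β_ Z V).hom Z' =
      wlAt (β_ Z X).hom (Y ⊗ Z') ≫ X ◁ wlAt (β_ Z Y).hom Z' ≫ mlAt v (Z ⊗ Z') := by
  calc
    _ = 𝟙 _ ⊗≫ (Z ◁ v ≫ (β_ Z V).hom) ▷ Z' ⊗≫ 𝟙 _ := by
      simp only [mlAt, wlAt]; monoidal
    _ = _ := by
      rw [BraidedCategory.braiding_naturality_right, BraidedCategory.braiding_tensor_right_hom]
      simp only [mlAt, wlAt]; monoidal

lemma wlAt_comp_braidings (f : X ⊗ Y ⟶ X' ⊗ Y') (Z : C) :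
    wlAt f Z ≫ X' ◁ (β_ Y' Z).hom ≫ wlAt (β_ X' Z).hom Y' =
      X ◁ (β_ Y Z).hom ≫ wlAt (β_ X Z).hom Y ≫ Z ◁ f := by
  rw [← mlAt_comp_braiding f Z]
  simp [wlAt, mlAt, BraidedCategory.braiding_tensor_left_hom]

lemma wlAt_braiding_conj (f : X ⊗ Y ⟶ X' ⊗ Y') (Z : C) :
    wlAt (β_ X Z).hom Y ≫ Z ◁ f ≫ wlAt (β_ X' Z).inv Y' =
      X ◁ (β_ Y Z).inv ≫ wlAt f Z ≫ X' ◁ (β_ Y' Z).hom := by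
  rw [← cancel_epi (X ◁ (β_ Y Z).hom), ← reassoc_of% (wlAt_comp_braidings f Z)]
  simp [wlAt]

end Braided

section NonDegenerate

variable {X Y Z V W : C} {𝒴 : Set C} {v : Z ⊗ V ⟶ W}

lemma NdLeftOn.hom_ext_braided (hv : NdLeftOn v 𝒴) (hY : Y ∈ 𝒴) {f g : X ⟶ Y ⊗ V}
    (h : Z ◁ f ≫ wlAt (β_ Z Y).hom V ≫ Y ◁ v = Z ◁ g ≫ wlAt (β_ Z Y).hom V ≫ Y ◁ v) :
    f = g := by
  have braid_back (f : X ⟶ Y ⊗ V) :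
      (Z ◁ f ≫ wlAt (β_ Z Y).hom V ≫ Y ◁ v) ≫ (β_ W Y).inv =
        Z ◁ (f ≫ (β_ V Y).inv) ≫ mlAt v Y := by
    simp only [assoc, whiskerLeft_comp_braiding_inv]
    simp [wlAt]
  rw [← cancel_mono (β_ V Y).inv]
  exact hv.hom_ext hY (by rw [← braid_back, ← braid_back, h])

lemma NdRightOn.hom_ext (hv : NdRightOn v 𝒴) (hI : 𝟙_ C ∈ 𝒴) {f g : X ⊗ Y ⟶ Z}
    (h : mlAt f V ≫ v = mlAt g V ≫ v) : f = g := by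
  have braid (f : X ⊗ Y ⟶ Z) : V ◁ (f ≫ (ρ_ Z).inv) ≫ mlAt ((β_ V Z).hom ≫ v) (𝟙_ C) =
      (β_ V (X ⊗ Y)).hom ≫ (α_ X Y V).hom ≫ (mlAt f V ≫ v) ≫ (ρ_ W).inv := by
    have unassoc : (α_ X Y V).hom ≫ mlAt f V = f ▷ V := by simp [mlAt]
    rw [assoc, reassoc_of% unassoc, ← BraidedCategory.braiding_naturality_right_assoc]
    simp only [mlAt]
    monoidal
  rw [← cancel_mono (ρ_ Z).inv]
  exact NdLeftOn.hom_ext hv hI (by rw [braid, braid, h])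

lemma mlAt_comp_double_braiding_inv (v : Z ⊗ V ⟶ W) (Y : C) :
    (β_ V (Z ⊗ Y)).hom ≫ (α_ Z Y V).hom ≫ Z ◁ (β_ Y V).hom ≫ mlAt v Y ≫
        (β_ Y W).inv ≫ (β_ W Y).inv =
      V ◁ ((β_ Y Z).inv ≫ (β_ Z Y).inv) ≫ mlAt ((β_ V Z).hom ≫ v) Y := by
  have slide : (β_ V (Z ⊗ Y)).hom ≫ (α_ Z Y V).hom ≫
        wlAt (β_ Y Z).inv V ≫ wlAt (β_ Z Y).inv V =
      V ◁ ((β_ Y Z).inv ≫ (β_ Z Y).inv) ≫ (β_ V (Z ⊗ Y)).hom ≫ (α_ Z Y V).hom := by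
    rw [BraidedCategory.braiding_naturality_right_assoc]
    simp [wlAt]
  rw [reassoc_of% (mlAt_comp_braiding_inv v Y), whiskerLeft_comp_braiding_inv,
    whiskerLeft_hom_inv_assoc, reassoc_of% slide, BraidedCategory.braiding_tensor_right_hom]
  simp [mlAt]

-- `Y` crosses `V` here by `β_ Y V`, in `NdRightOn` by `(β_ V Y).inv`; the discrepancy is a double
-- braiding on each side of the test equation, and so can be cancelled.
lemma NdRightOn.hom_ext_braided (hv : NdRightOn v 𝒴) (hY : Y ∈ 𝒴) {f g : X ⟶ Z ⊗ Y}
    (h : f ▷ V ≫ (α_ Z Y V).hom ≫ Z ◁ (β_ Y V).hom ≫ mlAt v Y =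
      g ▷ V ≫ (α_ Z Y V).hom ≫ Z ◁ (β_ Y V).hom ≫ mlAt v Y) : f = g := by
  have braid (f : X ⟶ Z ⊗ Y) :
      V ◁ (f ≫ (β_ Y Z).inv ≫ (β_ Z Y).inv) ≫ mlAt ((β_ V Z).hom ≫ v) Y =
        (β_ V X).hom ≫ (f ▷ V ≫ (α_ Z Y V).hom ≫ Z ◁ (β_ Y V).hom ≫ mlAt v Y) ≫
          (β_ Y W).inv ≫ (β_ W Y).inv := by
    rw [whiskerLeft_comp, assoc, ← mlAt_comp_double_braiding_inv,
      BraidedCategory.braiding_naturality_right_assoc]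
    simp only [assoc]
  rw [← cancel_mono ((β_ Y Z).inv ≫ (β_ Z Y).inv)]
  exact NdLeftOn.hom_ext hv hY (by rw [braid, braid, h])

end NonDegenerate

/-- The part of the structure of a regular weak multiplier bimonoid from which `g` is built:
`t₃`, `t₄` and the axioms about them are left out, and of the fusion morphism axioms only I, III,
V, VII and VIII are kept. The class of test objects is `{A}` for left and `{𝟙_ C, A}` for right
non-degeneracy. -/
structure PreWMB (A : C) where
  t₁ : A ⊗ A ⟶ A ⊗ A
  t₂ : A ⊗ A ⟶ A ⊗ A
  e₁ : A ⊗ A ⟶ A ⊗ A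
  e₂ : A ⊗ A ⟶ A ⊗ A
  j : A ⟶ 𝟙_ C
  m : A ⊗ A ⟶ A
  hm₁ : t₁ ≫ counitAt j A = m
  ndl : NdLeftOn m {A}
  ndr : NdRightOn m {𝟙_ C, A}
  hc12 : A ◁ t₁ ≫ mlAt m A = wlAt t₂ A ≫ A ◁ m
  hecomp : (A ⊗ A) ◁ e₁ ≫ midSw A ≫ m ▷ (A ⊗ A) ≫ A ◁ m =
    e₂ ▷ (A ⊗ A) ≫ midSw A ≫ m ▷ (A ⊗ A) ≫ A ◁ m
  ax1 : A ◁ t₁ ≫ wlAt (β_ A A).hom A ≫ A ◁ t₁ ≫ wlAt (β_ A A).inv A ≫ wlAt t₁ A =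
    wlAt t₁ A ≫ A ◁ t₁
  ax3 : t₁ ≫ e₁ = t₁
  ax5 : A ◁ t₁ ≫ wlAt e₁ A = wlAt e₁ A ≫ A ◁ t₁
  ax7 : wlAt t₁ A ≫ A ◁ counitAt j A ≫ m =
    A ◁ (β_ A A).hom ≫ A ◁ e₁ ≫ A ◁ (A ◁ j ≫ (ρ_ A).hom) ≫ m
  ax8 : wlAt t₁ A ≫ A ◁ (β_ A A).hom ≫ mlAt m A ≫ counitAt j A =
    A ◁ (β_ A A).hom ≫ A ◁ e₁ ≫ A ◁ counitAt j A ≫ m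

/-- The `PreWMB` underlying a regular weak multiplier bimonoid. -/
def RWMB.toPreWMB {A : C} {𝒴 : Set C} (S : RWMB A 𝒴) : PreWMB A where
  t₁ := S.t₁
  t₂ := S.t₂
  e₁ := S.e₁
  e₂ := S.e₂
  j := S.j
  m := S.m
  hm₁ := S.hm₁.symm
  ndl X _ hY := S.ndl X _ (Set.singleton_subset_iff.2 S.memA hY)
  ndr X _ hY := S.ndr X _ (Set.pair_subset S.memI S.memA hY)
  hc12 := S.hc12
  hecomp := S.hecomp
  ax1 := S.ax1
  ax3 := S.ax3
  ax5 := S.ax5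
  ax7 := S.ax7
  ax8 := S.ax8

namespace PreWMB

variable {A : C} (S : PreWMB A)

/-- The morphism `⊓̄ᴿ₂ := (1 ⊗ j) ∘ t₁`. -/
def piBarR2 : A ⊗ A ⟶ A := S.t₁ ≫ A ◁ S.j ≫ (ρ_ A).hom

/-- The morphism `⊓̄ᴸ₁ := (j ⊗ 1) ∘ t₂`. -/
def piBarL1 : A ⊗ A ⟶ A := S.t₂ ≫ counitAt S.j A

lemma wlAt_t₁_comp_counitAt (Z : C) : wlAt S.t₁ Z ≫ counitAt S.j (A ⊗ Z) = mlAt S.m Z := by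
  rw [wlAt_comp_counitAt, S.hm₁]

lemma mlAt_m_comp_t₁ : mlAt S.m A ≫ S.t₁ =
    A ◁ S.t₁ ≫ wlAt (β_ A A).hom A ≫ A ◁ S.t₁ ≫ wlAt (β_ A A).inv A ≫ mlAt S.m A := by
  rw [← wlAt_t₁_comp_counitAt, assoc, ← counitAt_naturality, ← reassoc_of% S.ax1]

lemma m_assoc : mlAt S.m A ≫ S.m = A ◁ S.m ≫ S.m := by
  calc
    mlAt S.m A ≫ S.m = (mlAt S.m A ≫ S.t₁) ≫ counitAt S.j A := by rw [assoc, S.hm₁]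
    _ = A ◁ S.t₁ ≫ A ◁ (β_ A A).inv ≫
        wlAt S.t₁ A ≫ A ◁ (β_ A A).hom ≫ mlAt S.m A ≫ counitAt S.j A := by
      simp only [mlAt_m_comp_t₁, assoc, reassoc_of% (wlAt_braiding_conj S.t₁ A)]
    _ = A ◁ (S.t₁ ≫ S.e₁ ≫ counitAt S.j A) ≫ S.m := by
      rw [S.ax8, whiskerLeft_inv_hom_assoc]
      simp only [whiskerLeft_comp, assoc]
    _ = A ◁ S.m ≫ S.m := by rw [reassoc_of% S.ax3, S.hm₁]

lemma whiskerLeft_wlAt_t₁_comp_mlAt_m (Z : C) :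
    A ◁ wlAt S.t₁ Z ≫ mlAt S.m (A ⊗ Z) = wlAt S.t₂ (A ⊗ Z) ≫ A ◁ mlAt S.m Z := by
  calc
    _ = 𝟙 _ ⊗≫ (A ◁ S.t₁ ≫ mlAt S.m A) ▷ Z ⊗≫ 𝟙 _ := by simp only [wlAt, mlAt]; monoidal
    _ = _ := by rw [S.hc12]; simp only [wlAt, mlAt]; monoidal

lemma whiskerLeft_m_comp_t₁ : A ◁ S.m ≫ S.t₁ = wlAt S.t₁ A ≫ A ◁ S.m := by
  refine S.ndl.hom_ext (Set.mem_singleton A) ?_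
  calc
    A ◁ (A ◁ S.m ≫ S.t₁) ≫ mlAt S.m A = wlAt S.t₂ (A ⊗ A) ≫ A ◁ A ◁ S.m ≫ A ◁ S.m := by
      rw [whiskerLeft_comp, assoc, S.hc12, reassoc_of% (wlAt_naturality S.t₂ S.m)]
    _ = (wlAt S.t₂ (A ⊗ A) ≫ A ◁ mlAt S.m A) ≫ A ◁ S.m := by
      simp only [assoc, ← whiskerLeft_comp, m_assoc]
    _ = A ◁ (wlAt S.t₁ A ≫ A ◁ S.m) ≫ mlAt S.m A := by
      rw [← whiskerLeft_wlAt_t₁_comp_mlAt_m, assoc, ← mlAt_naturality, whiskerLeft_comp, assoc]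

lemma e₁_e₂_compat :
    A ◁ A ◁ S.e₁ ≫ A ◁ wlAt (β_ A A).hom A ≫ mlAt S.m (A ⊗ A) ≫ A ◁ S.m =
      wlAt S.e₂ (A ⊗ A) ≫ A ◁ wlAt (β_ A A).hom A ≫ mlAt S.m (A ⊗ A) ≫ A ◁ S.m := by
  calc
    _ = 𝟙 _ ⊗≫ ((A ⊗ A) ◁ S.e₁ ≫ midSw A ≫ S.m ▷ (A ⊗ A) ≫ A ◁ S.m) ⊗≫ 𝟙 _ := by
      simp only [wlAt, mlAt, midSw]; monoidal
    _ = _ := by rw [S.hecomp]; simp only [wlAt, mlAt, midSw]; monoidal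

lemma wlAt_e₁_e₂_compat (Z : C) :
    A ◁ A ◁ wlAt S.e₁ Z ≫ A ◁ wlAt (β_ A A).hom (A ⊗ Z) ≫ mlAt S.m (A ⊗ A ⊗ Z) ≫
        A ◁ mlAt S.m Z =
      wlAt S.e₂ (A ⊗ A ⊗ Z) ≫ A ◁ wlAt (β_ A A).hom (A ⊗ Z) ≫ mlAt S.m (A ⊗ A ⊗ Z) ≫
        A ◁ mlAt S.m Z := by
  calc
    _ = 𝟙 _ ⊗≫ (A ◁ A ◁ S.e₁ ≫ A ◁ wlAt (β_ A A).hom A ≫ mlAt S.m (A ⊗ A) ≫ A ◁ S.m) ▷ Z ⊗≫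
        𝟙 _ := by
      simp only [wlAt, mlAt]; monoidal
    _ = _ := by rw [e₁_e₂_compat]; simp only [wlAt, mlAt]; monoidal

-- Multiplying both output strands from the left trades `e₁` for `e₂`, which acts on strands
-- disjoint from those of `m`.
lemma whiskerLeft_m_comp_e₁ : A ◁ S.m ≫ S.e₁ = wlAt S.e₁ A ≫ A ◁ S.m := by
  refine S.ndl.hom_ext_braided (Set.mem_singleton A) (S.ndl.hom_ext (Set.mem_singleton A) ?_)
  have m_assoc_tail : A ◁ A ◁ S.m ≫ A ◁ S.m = A ◁ mlAt S.m A ≫ A ◁ S.m := by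
    rw [← whiskerLeft_comp, ← whiskerLeft_comp, m_assoc]
  have m_past_braiding : A ◁ A ◁ A ◁ S.m ≫ A ◁ wlAt (β_ A A).hom A =
      A ◁ wlAt (β_ A A).hom (A ⊗ A) ≫ A ◁ A ◁ A ◁ S.m := by
    rw [← whiskerLeft_comp, ← whiskerLeft_comp, wlAt_naturality]
  calc
    _ = A ◁ A ◁ A ◁ S.m ≫ A ◁ A ◁ S.e₁ ≫ A ◁ wlAt (β_ A A).hom A ≫ mlAt S.m (A ⊗ A) ≫
        A ◁ S.m := by
      simp only [whiskerLeft_comp, assoc, mlAt_naturality]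
    _ = wlAt S.e₂ (A ⊗ A ⊗ A) ≫ A ◁ wlAt (β_ A A).hom (A ⊗ A) ≫ mlAt S.m (A ⊗ A ⊗ A) ≫
        A ◁ A ◁ S.m ≫ A ◁ S.m := by
      rw [e₁_e₂_compat, reassoc_of% (wlAt_naturality S.e₂ (A ◁ S.m)),
        reassoc_of% m_past_braiding, reassoc_of% (mlAt_naturality S.m (A ◁ S.m))]
    _ = A ◁ A ◁ wlAt S.e₁ A ≫ A ◁ wlAt (β_ A A).hom (A ⊗ A) ≫ mlAt S.m (A ⊗ A ⊗ A) ≫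
        A ◁ A ◁ S.m ≫ A ◁ S.m := by
      rw [m_assoc_tail, ← reassoc_of% (S.wlAt_e₁_e₂_compat A)]
    _ = A ◁ (A ◁ (wlAt S.e₁ A ≫ A ◁ S.m) ≫ wlAt (β_ A A).hom A ≫ A ◁ S.m) ≫ mlAt S.m A := by
      rw [← reassoc_of% (mlAt_naturality S.m (A ◁ S.m)), ← mlAt_naturality,
        ← reassoc_of% m_past_braiding]
      simp only [whiskerLeft_comp, assoc]

lemma mlAt_piBarR2_comp_m :
    mlAt S.piBarR2 A ≫ S.m = A ◁ ((β_ A A).hom ≫ S.e₁ ≫ A ◁ S.j ≫ (ρ_ A).hom) ≫ S.m := by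
  rw [piBarR2, ← wlAt_comp_whiskerLeft_counitAt, assoc, S.ax7]
  simp only [whiskerLeft_comp, assoc]

lemma mlAt_piBarR2_comp_mlAt_m (Z : C) : mlAt S.piBarR2 (A ⊗ Z) ≫ mlAt S.m Z =
    A ◁ (wlAt ((β_ A A).hom ≫ S.e₁) Z ≫ A ◁ counitAt S.j Z) ≫ mlAt S.m Z := by
  calc
    _ = 𝟙 _ ⊗≫ (mlAt S.piBarR2 A ≫ S.m) ▷ Z ⊗≫ 𝟙 _ := by simp only [mlAt]; monoidal
    _ = _ := by
      rw [mlAt_piBarR2_comp_m]; simp only [wlAt, mlAt, counitAt]; monoidal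

lemma mlAt_m_comp_piBarR2 : mlAt S.m A ≫ S.piBarR2 = A ◁ S.piBarR2 ≫ S.m := by
  refine S.ndr.hom_ext (by simp) ?_
  have m_piBarR2_m :
      mlAt S.m (A ⊗ A) ≫ mlAt S.piBarR2 A ≫ S.m = A ◁ mlAt S.piBarR2 A ≫ mlAt S.m A ≫ S.m := by
    rw [mlAt_piBarR2_comp_m, ← reassoc_of% (mlAt_naturality S.m), m_assoc,
      ← whiskerLeft_comp_assoc, ← whiskerLeft_comp_assoc, mlAt_piBarR2_comp_m]
  calc
    _ = 𝟙 _ ⊗≫ (mlAt S.m (A ⊗ A) ≫ mlAt S.piBarR2 A ≫ S.m) ⊗≫ 𝟙 _ := by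
      simp only [mlAt]; monoidal
    _ = _ := by rw [m_piBarR2_m]; simp only [mlAt]; monoidal

lemma mlAt_m_comp_mlAt_piBarR2 (Z : C) :
    mlAt S.m (A ⊗ Z) ≫ mlAt S.piBarR2 Z = A ◁ mlAt S.piBarR2 Z ≫ mlAt S.m Z := by
  calc
    _ = 𝟙 _ ⊗≫ (mlAt S.m A ≫ S.piBarR2) ▷ Z ⊗≫ 𝟙 _ := by simp only [mlAt]; monoidal
    _ = _ := by rw [mlAt_m_comp_piBarR2]; simp only [mlAt]; monoidal

-- The identity exhibits the defining right-hand side of `g`, after a non-degenerate test, as a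
-- morphism factoring through `1 ⊗ m`.
lemma mlAt_piBarR2_comp_braiding_comp_mlAt_m :
    A ◁ wlAt S.t₁ A ≫ mlAt S.piBarR2 (A ⊗ A) ≫ A ◁ (β_ A A).hom ≫ mlAt S.m A =
      A ◁ mlAt S.m A ≫ A ◁ (β_ A A).hom ≫ A ◁ S.e₁ ≫ mlAt S.m A := by
  have pass_t₁ : wlAt S.t₁ A ≫ A ◁ (β_ A A).hom ≫ wlAt ((β_ A A).hom ≫ S.e₁) A ≫
        A ◁ counitAt S.j A =
      mlAt S.m A ≫ (β_ A A).hom ≫ S.e₁ := by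
    calc
      _ = A ◁ (β_ A A).hom ≫ wlAt (β_ A A).hom A ≫ A ◁ S.t₁ ≫ wlAt S.e₁ A ≫
          A ◁ counitAt S.j A := by
        rw [wlAt_comp, assoc, reassoc_of% (wlAt_comp_braidings S.t₁ A)]
      _ = A ◁ (β_ A A).hom ≫ wlAt (β_ A A).hom A ≫ A ◁ S.m ≫ S.e₁ := by
        rw [reassoc_of% S.ax5, ← whiskerLeft_comp, S.hm₁, whiskerLeft_m_comp_e₁]
      _ = mlAt S.m A ≫ (β_ A A).hom ≫ S.e₁ := by
        rw [reassoc_of% (mlAt_comp_braiding S.m A)]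
  rw [← reassoc_of% (mlAt_naturality S.piBarR2), mlAt_piBarR2_comp_mlAt_m]
  simp only [← whiskerLeft_comp_assoc, pass_t₁]

lemma comp_whiskerLeft_t₁_comp_mlAt_piBarR2 {X : C} {p q : X ⟶ A ⊗ A ⊗ A}
    (h : p ≫ A ◁ S.m = q ≫ A ◁ S.m) :
    p ≫ A ◁ S.t₁ ≫ mlAt S.piBarR2 A = q ≫ A ◁ S.t₁ ≫ mlAt S.piBarR2 A := by
  have test : (A ◁ S.t₁ ≫ mlAt S.piBarR2 A) ▷ A ≫ (α_ A A A).hom ≫ A ◁ (β_ A A).hom ≫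
        mlAt S.m A =
      (A ◁ S.m) ▷ A ≫ (α_ A A A).hom ≫ A ◁ (β_ A A).hom ≫ A ◁ S.e₁ ≫ mlAt S.m A := by
    calc
      _ = 𝟙 _ ⊗≫ (A ◁ wlAt S.t₁ A ≫ mlAt S.piBarR2 (A ⊗ A) ≫ A ◁ (β_ A A).hom ≫
          mlAt S.m A) ⊗≫ 𝟙 _ := by
        simp only [wlAt, mlAt]; monoidal
      _ = _ := by
        rw [mlAt_piBarR2_comp_braiding_comp_mlAt_m]; simp only [mlAt]; monoidal
  refine S.ndr.hom_ext_braided (by simp) ?_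
  rw [comp_whiskerRight p, comp_whiskerRight q, assoc, assoc, test,
    ← comp_whiskerRight_assoc, ← comp_whiskerRight_assoc, h]

section Descent

variable [PreservesColimitsOfShape WalkingParallelPair (tensorLeft A)] [IsRegularEpi S.m]

/-- The morphism `g : A ⊗ A ⟶ A ⊗ A` descended from `(⊓̄ᴿ₂ ⊗ 1) ∘ (1 ⊗ t₁)` along the regular
epimorphism `1 ⊗ m`. -/
noncomputable def g : A ⊗ A ⟶ A ⊗ A :=
  IsRegularEpi.desc (A ◁ S.m) (A ◁ S.t₁ ≫ mlAt S.piBarR2 A)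
    (S.comp_whiskerLeft_t₁_comp_mlAt_piBarR2 (IsRegularEpi.w _))

lemma whiskerLeft_m_comp_g : A ◁ S.m ≫ S.g = A ◁ S.t₁ ≫ mlAt S.piBarR2 A :=
  IsRegularEpi.fac _ _ _

lemma whiskerLeft_mlAt_m_comp_wlAt_g (Z : C) :
    A ◁ mlAt S.m Z ≫ wlAt S.g Z = A ◁ wlAt S.t₁ Z ≫ mlAt S.piBarR2 (A ⊗ Z) := by
  calc
    _ = 𝟙 _ ⊗≫ (A ◁ S.m ≫ S.g) ▷ Z ⊗≫ 𝟙 _ := by simp only [wlAt, mlAt]; monoidal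
    _ = _ := by rw [whiskerLeft_m_comp_g]; simp only [wlAt, mlAt]; monoidal

lemma mlAt_m_comp_g : mlAt S.m A ≫ S.g = A ◁ S.g ≫ mlAt S.m A := by
  rw [← cancel_epi (A ◁ A ◁ S.m)]
  calc
    A ◁ A ◁ S.m ≫ mlAt S.m A ≫ S.g = A ◁ A ◁ S.t₁ ≫ mlAt S.m (A ⊗ A) ≫ mlAt S.piBarR2 A := by
      rw [reassoc_of% (mlAt_naturality S.m S.m), whiskerLeft_m_comp_g,
        ← reassoc_of% (mlAt_naturality S.m S.t₁)]
    _ = A ◁ (A ◁ S.m ≫ S.g) ≫ mlAt S.m A := by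
      rw [mlAt_m_comp_mlAt_piBarR2, whiskerLeft_m_comp_g, whiskerLeft_comp, assoc]
    _ = A ◁ A ◁ S.m ≫ A ◁ S.g ≫ mlAt S.m A := by rw [whiskerLeft_comp, assoc]

lemma whiskerLeft_m_comp_g_comp_counitAt :
    A ◁ S.m ≫ S.g ≫ counitAt S.j A = A ◁ S.t₁ ≫ mlAt S.m A ≫ counitAt S.j A := by
  rw [reassoc_of% S.whiskerLeft_m_comp_g, piBarR2, ← wlAt_comp_whiskerLeft_counitAt, assoc,
    counitAt_naturality, reassoc_of% (S.wlAt_t₁_comp_counitAt A)]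

variable [PreservesColimitsOfShape WalkingParallelPair (tensorRight A)]

lemma whiskerLeft_m_comp_g_eq_wlAt : A ◁ S.m ≫ S.g = wlAt S.g A ≫ A ◁ S.m := by
  rw [← cancel_epi (A ◁ mlAt S.m A)]
  calc
    A ◁ mlAt S.m A ≫ A ◁ S.m ≫ S.g = A ◁ (A ◁ S.m ≫ S.t₁) ≫ mlAt S.piBarR2 A := by
      rw [← whiskerLeft_comp_assoc, m_assoc, whiskerLeft_comp_assoc, whiskerLeft_m_comp_g,
        whiskerLeft_comp_assoc]
    _ = A ◁ wlAt S.t₁ A ≫ mlAt S.piBarR2 (A ⊗ A) ≫ A ◁ S.m := by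
      rw [whiskerLeft_m_comp_t₁, whiskerLeft_comp_assoc, mlAt_naturality]
    _ = A ◁ mlAt S.m A ≫ wlAt S.g A ≫ A ◁ S.m := by
      rw [reassoc_of% (S.whiskerLeft_mlAt_m_comp_wlAt_g A)]

lemma wlAt_g_comp_braiding_comp_mlAt_m :
    wlAt S.g A ≫ A ◁ (β_ A A).hom ≫ mlAt S.m A =
      A ◁ (β_ A A).hom ≫ A ◁ S.e₁ ≫ mlAt S.m A := by
  rw [← cancel_epi (A ◁ mlAt S.m A), reassoc_of% (S.whiskerLeft_mlAt_m_comp_wlAt_g A),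
    mlAt_piBarR2_comp_braiding_comp_mlAt_m]

lemma g_comp_whiskerLeft_counit : S.g ≫ A ◁ S.j ≫ (ρ_ A).hom = S.piBarR2 := by
  refine S.ndr.hom_ext (by simp) ?_
  calc
    mlAt (S.g ≫ A ◁ S.j ≫ (ρ_ A).hom) A ≫ S.m =
        wlAt S.g A ≫ A ◁ (β_ A A).hom ≫ A ◁ (A ◁ S.j ≫ (ρ_ A).hom) ≫ S.m := by
      rw [← wlAt_comp_whiskerLeft_counitAt, assoc, ← braiding_comp_whiskerLeft_counit,
        whiskerLeft_comp_assoc]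
    _ = (wlAt S.g A ≫ A ◁ (β_ A A).hom ≫ mlAt S.m A) ≫ A ◁ S.j ≫ (ρ_ A).hom := by
      simp only [assoc, mlAt_comp_whiskerLeft_counit]
    _ = mlAt S.piBarR2 A ≫ S.m := by
      simp only [wlAt_g_comp_braiding_comp_mlAt_m, mlAt_piBarR2_comp_m, assoc,
        mlAt_comp_whiskerLeft_counit, whiskerLeft_comp]

lemma g_comp_counitAt : S.g ≫ counitAt S.j A = S.piBarL1 := by
  refine S.ndr.hom_ext (by simp) ?_
  calc
    mlAt (S.g ≫ counitAt S.j A) A ≫ S.m = wlAt S.g A ≫ A ◁ S.m ≫ counitAt S.j A := by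
      rw [← wlAt_comp_counitAt, assoc, counitAt_naturality]
    _ = A ◁ S.t₁ ≫ mlAt S.m A ≫ counitAt S.j A := by
      rw [← reassoc_of% S.whiskerLeft_m_comp_g_eq_wlAt, whiskerLeft_m_comp_g_comp_counitAt]
    _ = mlAt S.piBarL1 A ≫ S.m := by
      rw [reassoc_of% S.hc12, counitAt_naturality, piBarL1, ← wlAt_comp_counitAt, assoc]

lemma mlAt_m_comp_g_eq_wlAt_t₂ : mlAt S.m A ≫ S.g = wlAt S.t₂ A ≫ A ◁ S.piBarL1 := by
  rw [mlAt_m_comp_g, ← cancel_epi (A ◁ A ◁ S.m)]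
  calc
    A ◁ A ◁ S.m ≫ A ◁ S.g ≫ mlAt S.m A =
        A ◁ A ◁ S.t₁ ≫ (A ◁ wlAt S.t₁ A ≫ mlAt S.m (A ⊗ A)) ≫ A ◁ counitAt S.j A := by
      rw [← whiskerLeft_comp_assoc, whiskerLeft_m_comp_g, piBarR2,
        ← wlAt_comp_whiskerLeft_counitAt]
      simp only [whiskerLeft_comp, assoc, mlAt_naturality]
    _ = wlAt S.t₂ (A ⊗ A) ≫ A ◁ (A ◁ S.t₁ ≫ mlAt S.m A ≫ counitAt S.j A) := by
      rw [whiskerLeft_wlAt_t₁_comp_mlAt_m, assoc, reassoc_of% (wlAt_naturality S.t₂ S.t₁)]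
      simp only [whiskerLeft_comp]
    _ = A ◁ A ◁ S.m ≫ wlAt S.t₂ A ≫ A ◁ S.piBarL1 := by
      rw [← whiskerLeft_m_comp_g_comp_counitAt, g_comp_counitAt, whiskerLeft_comp,
        ← reassoc_of% (wlAt_naturality S.t₂ S.m)]

lemma whiskerLeft_wlAt_g_comp_braidings :
    A ◁ wlAt S.g A ≫ wlAt (β_ A A).hom (A ⊗ A) ≫ A ◁ mlAt S.m A ≫ A ◁ (β_ A A).hom ≫
        mlAt S.m A =
      wlAt (β_ A A).hom (A ⊗ A) ≫ wlAt S.e₂ (A ⊗ A) ≫ A ◁ mlAt S.m A ≫ A ◁ (β_ A A).hom ≫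
        mlAt S.m A := by
  have braid_m : A ◁ mlAt S.m A ≫ A ◁ (β_ A A).hom ≫ mlAt S.m A =
      A ◁ A ◁ (β_ A A).hom ≫ A ◁ wlAt (β_ A A).hom A ≫ mlAt S.m (A ⊗ A) ≫ A ◁ S.m := by
    rw [← whiskerLeft_comp_assoc, mlAt_comp_braiding]
    simp only [whiskerLeft_comp, assoc, mlAt_naturality]
  have m_past_braiding : wlAt (β_ A A).hom (A ⊗ A) ≫ A ◁ wlAt (β_ A A).hom A ≫
      mlAt S.m (A ⊗ A) ≫ A ◁ S.m = A ◁ mlAt S.m A ≫ wlAt (β_ A A).hom A ≫ A ◁ S.m := by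
    rw [reassoc_of% (whiskerLeft_mlAt_comp_wlAt_braiding S.m A A)]
  calc
    _ = A ◁ (wlAt S.g A ≫ A ◁ (β_ A A).hom ≫ mlAt S.m A) ≫ wlAt (β_ A A).hom A ≫ A ◁ S.m := by
      rw [braid_m, ← reassoc_of% (wlAt_naturality (β_ A A).hom (β_ A A).hom), m_past_braiding]
      simp only [whiskerLeft_comp, assoc]
    _ = A ◁ A ◁ (β_ A A).hom ≫ A ◁ A ◁ S.e₁ ≫ wlAt (β_ A A).hom (A ⊗ A) ≫
        A ◁ wlAt (β_ A A).hom A ≫ mlAt S.m (A ⊗ A) ≫ A ◁ S.m := by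
      rw [wlAt_g_comp_braiding_comp_mlAt_m, m_past_braiding]
      simp only [whiskerLeft_comp, assoc]
    _ = A ◁ A ◁ (β_ A A).hom ≫ wlAt (β_ A A).hom (A ⊗ A) ≫ wlAt S.e₂ (A ⊗ A) ≫
        A ◁ wlAt (β_ A A).hom A ≫ mlAt S.m (A ⊗ A) ≫ A ◁ S.m := by
      rw [reassoc_of% (wlAt_naturality (β_ A A).hom S.e₁), e₁_e₂_compat]
    _ = _ := by
      rw [reassoc_of% (wlAt_naturality (β_ A A).hom (β_ A A).hom),
        reassoc_of% (wlAt_naturality S.e₂ (β_ A A).hom), ← braid_m]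

lemma whiskerLeft_g_comp_wlAt_braiding_comp_m :
    A ◁ S.g ≫ wlAt (β_ A A).hom A ≫ A ◁ S.m =
      wlAt (β_ A A).hom A ≫ wlAt S.e₂ A ≫ A ◁ S.m := by
  refine S.ndr.hom_ext_braided (by simp) ?_
  calc
    _ = 𝟙 _ ⊗≫ (A ◁ wlAt S.g A ≫ wlAt (β_ A A).hom (A ⊗ A) ≫ A ◁ mlAt S.m A ≫
        A ◁ (β_ A A).hom ≫ mlAt S.m A) ⊗≫ 𝟙 _ := by
      simp only [wlAt, mlAt]; monoidal
    _ = _ := by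
      rw [whiskerLeft_wlAt_g_comp_braidings]; simp only [wlAt, mlAt]; monoidal

end Descent

end PreWMB

theorem lemma_g_general {A : C} (S : PreWMB A)
    [PreservesColimitsOfShape WalkingParallelPair (tensorLeft A)]
    [PreservesColimitsOfShape WalkingParallelPair (tensorRight A)] [IsRegularEpi S.m] :
    ∃ g : A ⊗ A ⟶ A ⊗ A,
      (A ◁ S.m ≫ g = A ◁ S.t₁ ≫ mlAt S.piBarR2 A) ∧
      (mlAt S.m A ≫ g = wlAt S.t₂ A ≫ A ◁ S.piBarL1) ∧
      (∀ g' : A ⊗ A ⟶ A ⊗ A, A ◁ S.m ≫ g' = A ◁ S.t₁ ≫ mlAt S.piBarR2 A → g' = g) ∧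
      (∀ g' : A ⊗ A ⟶ A ⊗ A, mlAt S.m A ≫ g' = wlAt S.t₂ A ≫ A ◁ S.piBarL1 → g' = g) ∧
      (wlAt g A ≫ A ◁ (β_ A A).hom ≫ mlAt S.m A =
        A ◁ (β_ A A).hom ≫ A ◁ S.e₁ ≫ mlAt S.m A) ∧
      (A ◁ g ≫ wlAt (β_ A A).hom A ≫ A ◁ S.m =
        wlAt (β_ A A).hom A ≫ wlAt S.e₂ A ≫ A ◁ S.m) ∧
      (mlAt S.m A ≫ g = A ◁ g ≫ mlAt S.m A) ∧
      (A ◁ S.m ≫ g = wlAt g A ≫ A ◁ S.m) ∧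
      (g ≫ A ◁ S.j ≫ (ρ_ A).hom = S.piBarR2) ∧
      (g ≫ counitAt S.j A = S.piBarL1) :=
  ⟨S.g, S.whiskerLeft_m_comp_g, S.mlAt_m_comp_g_eq_wlAt_t₂,
    fun _ h ↦ (cancel_epi (A ◁ S.m)).1 (h.trans S.whiskerLeft_m_comp_g.symm),
    fun _ h ↦ (cancel_epi (mlAt S.m A)).1 (h.trans S.mlAt_m_comp_g_eq_wlAt_t₂.symm),
    S.wlAt_g_comp_braiding_comp_mlAt_m, S.whiskerLeft_g_comp_wlAt_braiding_comp_m,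
    S.mlAt_m_comp_g, S.whiskerLeft_m_comp_g_eq_wlAt, S.g_comp_whiskerLeft_counit,
    S.g_comp_counitAt⟩

/-- Lemma 5.1: there is a unique morphism `g : A ⊗ A ⟶ A ⊗ A` with
`g ∘ (1 ⊗ m) = (⊓̄ᴿ₂ ⊗ 1) ∘ (1 ⊗ t₁)`, it is equivalently characterized by
`g ∘ (m ⊗ 1) = (1 ⊗ ⊓̄ᴸ₁) ∘ (t₂ ⊗ 1)`, and it satisfies properties (2)-(4). -/
theorem lemma_g
    (presL : ∀ X : C, PreservesColimitsOfShape WalkingParallelPair (tensorLeft X))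
    (presR : ∀ X : C, PreservesColimitsOfShape WalkingParallelPair (tensorRight X))
    {A : C} {𝒴 : Set C} (S : RWMB A 𝒴)
    (hmreg : Nonempty (RegularEpi S.m)) :
    ∃ g : A ⊗ A ⟶ A ⊗ A,
      -- (1) the two equivalent defining diagrams, each determining `g` uniquely
      ((A ◁ S.m) ≫ g = (A ◁ S.t₁) ≫ ml S.piBarR2) ∧
      (ml S.m ≫ g = wl S.t₂ ≫ (A ◁ S.piBarL1)) ∧
      (∀ g' : A ⊗ A ⟶ A ⊗ A,
        (A ◁ S.m) ≫ g' = (A ◁ S.t₁) ≫ ml S.piBarR2 → g' = g) ∧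
      (∀ g' : A ⊗ A ⟶ A ⊗ A,
        ml S.m ≫ g' = wl S.t₂ ≫ (A ◁ S.piBarL1) → g' = g) ∧
      -- (2) `(m ⊗ 1) ∘ (1 ⊗ c) ∘ (g ⊗ 1) = (m ⊗ 1) ∘ (1 ⊗ e₁) ∘ (1 ⊗ c)`
      (wl g ≫ (A ◁ (β_ A A).hom) ≫ ml S.m
        = (A ◁ (β_ A A).hom) ≫ (A ◁ S.e₁) ≫ ml S.m) ∧
      -- and `(1 ⊗ m) ∘ (c ⊗ 1) ∘ (1 ⊗ g) = (1 ⊗ m) ∘ (e₂ ⊗ 1) ∘ (c ⊗ 1)`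
      ((A ◁ g) ≫ wl (β_ A A).hom ≫ (A ◁ S.m)
        = wl (β_ A A).hom ≫ wl S.e₂ ≫ (A ◁ S.m)) ∧
      -- (3) `g ∘ (m ⊗ 1) = (m ⊗ 1) ∘ (1 ⊗ g)` and `g ∘ (1 ⊗ m) = (1 ⊗ m) ∘ (g ⊗ 1)`
      (ml S.m ≫ g = (A ◁ g) ≫ ml S.m) ∧
      ((A ◁ S.m) ≫ g = wl g ≫ (A ◁ S.m)) ∧
      -- (4) `(1 ⊗ j) ∘ g = (1 ⊗ j) ∘ t₁ = ⊓̄ᴿ₂` and `(j ⊗ 1) ∘ g = (j ⊗ 1) ∘ t₂ = ⊓̄ᴸ₁`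
      (g ≫ (A ◁ S.j) ≫ (ρ_ A).hom = S.piBarR2) ∧
      (g ≫ (S.j ▷ A) ≫ (λ_ A).hom = S.piBarL1) := by
  have := presL A
  have := presR A
  have : IsRegularEpi S.toPreWMB.m := ⟨hmreg⟩
  exact lemma_g_general S.toPreWMB

end WeakMultiplierBimonoid
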